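/- arXiv:1111.3848 — 5 statements merged into one kernel-verified Lean document; each statement's English description precedes it below -/
import Mathlib

section
/- Let a, b be positive real numbers with a ≠ b, let λ ∈ ℂ, and let n, v ∈ ℕ with n ≥ 1 and v ≥ 1. Then S(n,v;a,b;λ) = Σ_{j=0}^{n−1} binom(n−1,j)·S(j,v−1;a,b;λ)·(λ·(ln b)^{n−j} − (ln a)^{n−j}). -/
open Finset

/-- The generalized λ-Stirling type numbers of the second kind. -/
noncomputable def genStirling (a b : ℝ) (lam : ℂ) (n v : ℕ) : ℂ :=
  (1 / (v.factorial : ℂ)) * ∑ j ∈ range (v + 1),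
    (-1) ^ j * (v.choose j : ℂ) * lam ^ (v - j) *
      ((j : ℂ) * (Real.log a : ℂ) + ((v - j : ℕ) : ℂ) * (Real.log b : ℂ)) ^ n

/-!
With `x = log a` and `y = log b`, the numbers `S(n, v)` have exponential generating function
`F(t) ^ v / v!` in `n`, where `F(t) = λ e^{yt} - e^{xt}`. The recurrence is the comparison of
coefficients in `(F ^ (v + 1) / (v + 1)!)' = (F ^ v / v!) · F'`.
-/

section

open PowerSeries
open scoped Nat

section CommSemiring

variable {R : Type*} [CommSemiring R]

/-- The `n`-th coefficient `n! [tⁿ] f` of a power series `f` read as an exponential generating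
function. It is bundled as a linear map in `f`. -/
noncomputable def egfCoeff (n : ℕ) : R⟦X⟧ →ₗ[R] R :=
  (n ! : R) • coeff n

theorem egfCoeff_apply (n : ℕ) (f : R⟦X⟧) : egfCoeff n f = n ! * coeff n f :=
  rfl

theorem egfCoeff_derivative (n : ℕ) (f : R⟦X⟧) :
    egfCoeff n (d⁄dX R f) = egfCoeff (n + 1) f := by
  simp only [egfCoeff_apply, coeff_derivative, Nat.factorial_succ]
  push_cast
  ring

theorem egfCoeff_mul (n : ℕ) (f g : R⟦X⟧) :
    egfCoeff n (f * g) =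
      ∑ j ∈ range (n + 1), (n.choose j : R) * egfCoeff j f * egfCoeff (n - j) g := by
  simp only [egfCoeff_apply, coeff_mul, Nat.sum_antidiagonal_eq_sum_range_succ_mk, mul_sum]
  refine sum_congr rfl fun j hj ↦ ?_
  rw [← Nat.choose_mul_factorial_mul_factorial (mem_range_succ_iff.mp hj)]
  push_cast
  ring

end CommSemiring

section RatAlgebra

variable {R : Type*} [CommRing R] [Algebra ℚ R]

theorem egfCoeff_rescale_exp (n : ℕ) (c : R) : egfCoeff n (rescale c (exp R)) = c ^ n := by
  have factorial_mul_inv : (n ! : R) * algebraMap ℚ R (1 / n !) = 1 := by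
    rw [← map_natCast (algebraMap ℚ R), ← map_mul,
      mul_one_div_cancel (Nat.cast_ne_zero.mpr n.factorial_ne_zero), map_one]
  rw [egfCoeff_apply, coeff_rescale, coeff_exp, mul_left_comm, factorial_mul_inv, mul_one]

theorem rescale_exp_pow (c : R) (k : ℕ) :
    rescale c (exp R) ^ k = rescale (k * c) (exp R) := by
  rw [← map_pow, exp_pow_eq_rescale_exp, rescale_rescale]

theorem derivation_inv_factorial_smul_pow_succ {A : Type*} [CommRing A] [Algebra R A]
    (D : Derivation R A A) (f : A) (v : ℕ) :
    D (algebraMap ℚ R (1 / (v + 1)!) • f ^ (v + 1)) =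
      algebraMap ℚ R (1 / v !) • f ^ v * D f := by
  have inv_factorial_succ_mul :
      algebraMap ℚ R (1 / (v + 1)!) * ((v + 1 : ℕ) : R) = algebraMap ℚ R (1 / v !) := by
    rw [← map_natCast (algebraMap ℚ R), ← map_mul, Nat.factorial_succ]
    congr 1
    push_cast
    field_simp
  rw [D.map_smul, D.leibniz_pow, Nat.add_sub_cancel, ← inv_factorial_succ_mul, mul_smul,
    Nat.cast_smul_eq_nsmul, smul_eq_mul, smul_mul_assoc, smul_mul_assoc]

/-- The power series `λ e^{yt} - e^{xt}` in `t`, whose powers generate the λ-Stirling type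
numbers. -/
noncomputable def lambdaExpSub (x y lam : R) : R⟦X⟧ :=
  lam • rescale y (exp R) - rescale x (exp R)

theorem egfCoeff_lambdaExpSub (x y lam : R) (n : ℕ) :
    egfCoeff n (lambdaExpSub x y lam) = lam * y ^ n - x ^ n := by
  simp only [lambdaExpSub, map_sub, map_smul, egfCoeff_rescale_exp, smul_eq_mul]

theorem lambdaExpSub_pow (x y lam : R) (v : ℕ) :
    lambdaExpSub x y lam ^ v =
      ∑ j ∈ range (v + 1), ((-1) ^ j * (v.choose j : R) * lam ^ (v - j)) •
        rescale (j * x + (v - j : ℕ) * y) (exp R) := by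
  rw [lambdaExpSub, sub_eq_neg_add, add_pow]
  refine sum_congr rfl fun j _ ↦ ?_
  rw [← exp_mul_exp_eq_exp_add, ← rescale_exp_pow, ← rescale_exp_pow, neg_pow, smul_pow]
  simp only [smul_eq_C_mul, map_mul, map_pow, map_neg, map_one, map_natCast]
  ring

/-- The λ-Stirling type numbers of the second kind over a commutative `ℚ`-algebra, with arbitrary
elements `x` and `y` in the places of `log a` and `log b`. -/
noncomputable def lambdaStirling (x y lam : R) (n v : ℕ) : R :=
  algebraMap ℚ R (1 / v !) * ∑ j ∈ range (v + 1),
    (-1) ^ j * (v.choose j : R) * lam ^ (v - j) * (j * x + (v - j : ℕ) * y) ^ n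

theorem egfCoeff_inv_factorial_smul_lambdaExpSub_pow (x y lam : R) (n v : ℕ) :
    egfCoeff n (algebraMap ℚ R (1 / v !) • lambdaExpSub x y lam ^ v) =
      lambdaStirling x y lam n v := by
  simp only [lambdaStirling, lambdaExpSub_pow, map_smul, map_sum, egfCoeff_rescale_exp,
    smul_eq_mul]

theorem stmt_1_general (x y lam : R) (n v : ℕ) :
    lambdaStirling x y lam (n + 1) (v + 1) =
      ∑ j ∈ range (n + 1), (n.choose j : R) * lambdaStirling x y lam j v *
        (lam * y ^ (n + 1 - j) - x ^ (n + 1 - j)) := by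
  rw [← egfCoeff_inv_factorial_smul_lambdaExpSub_pow, ← egfCoeff_derivative,
    derivation_inv_factorial_smul_pow_succ, egfCoeff_mul]
  refine sum_congr rfl fun j hj ↦ ?_
  rw [egfCoeff_inv_factorial_smul_lambdaExpSub_pow, egfCoeff_derivative, egfCoeff_lambdaExpSub,
    Nat.sub_add_comm (mem_range_succ_iff.mp hj)]

end RatAlgebra

theorem genStirling_eq_lambdaStirling (a b : ℝ) (lam : ℂ) (n v : ℕ) :
    genStirling a b lam n v = lambdaStirling (Real.log a : ℂ) (Real.log b : ℂ) lam n v := by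
  simp only [genStirling, lambdaStirling, map_div₀, map_one, map_natCast]

end

theorem stmt_1 (a b : ℝ) (ha : 0 < a) (hb : 0 < b) (hab : a ≠ b) (lam : ℂ) (n v : ℕ)
    (hn : 1 ≤ n) (hv : 1 ≤ v) :
    genStirling a b lam n v =
      ∑ j ∈ range n, ((n - 1).choose j : ℂ) * genStirling a b lam j (v - 1) *
        (lam * (Real.log b : ℂ) ^ (n - j) - (Real.log a : ℂ) ^ (n - j)) := by
  simp only [genStirling_eq_lambdaStirling]
  match n, v, hn, hv with
  | n + 1, v + 1, _, _ => exact stmt_1_general _ _ lam n v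
end

section
/- Let a, b be positive real numbers with a ≠ b, let λ ∈ ℂ, and let n, v ∈ ℕ with n ≥ 1 and v ≥ 1. Then S(n,v;a,b;λ) = v·(ln b)·S(n−1,v;a,b;λ) + ln(b/a)·Σ_{j=0}^{n−1} binom(n−1,j)·S(j,v−1;a,b;λ)·(ln a)^{n−1−j}. -/
open Finset

/-!
Up to the factor `v!`, the number `S(n, v; a, b; λ)` is the value at `0` of `(λ E_y - E_x) ^ v`
applied to `z ↦ z ^ n`, where `x = log a`, `y = log b` and `E_c` is the shift `z ↦ z + c`.
Write `z ^ (m + 1) = v y z ^ m + (z - v y) z ^ m`. At the node `j x + (v - j) y` the factor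
`z - v y` equals `j (x - y)`, and absorbing `j` into `v.choose j` lowers the order from `v` to
`v - 1` while shifting the argument by `x`; the binomial expansion of `(z + x) ^ m` then gives
the sum in the recurrence.
-/

section WeightedDiff

variable {R : Type*} [CommRing R] (x y l : R)

/-- The weighted mixed difference of order `v` at the origin, that is, `f ↦ ((l E_y - E_x) ^ v f) 0`
with `E_c` the shift by `c`. It is bundled as a linear functional on all functions `R → R`, and
division by `v!` is left out so that it makes sense over any commutative ring. -/
def weightedDiff (v : ℕ) : (R → R) →ₗ[R] R :=
  ∑ j ∈ range (v + 1), ((-1) ^ j * (v.choose j : R) * l ^ (v - j)) •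
    LinearMap.proj ((j : R) * x + ((v - j : ℕ) : R) * y)

lemma weightedDiff_apply (v : ℕ) (f : R → R) :
    weightedDiff x y l v f = ∑ j ∈ range (v + 1), (-1) ^ j * (v.choose j : R) * l ^ (v - j) *
      f ((j : R) * x + ((v - j : ℕ) : R) * y) := by
  simp [weightedDiff]

lemma weightedDiff_succ_sub_mul (v : ℕ) (f : R → R) :
    weightedDiff x y l (v + 1) (fun z ↦ (z - (v + 1) * y) * f z) =
      (v + 1) * (y - x) * weightedDiff x y l v (fun z ↦ f (z + x)) := by
  simp only [weightedDiff_apply]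
  rw [sum_range_succ', mul_sum]
  have first_term_eq_zero : (-1) ^ 0 * ((v + 1).choose 0 : R) * l ^ (v + 1 - 0) *
      ((((0 : ℕ) : R) * x + ((v + 1 - 0 : ℕ) : R) * y - (v + 1) * y) *
        f (((0 : ℕ) : R) * x + ((v + 1 - 0 : ℕ) : R) * y)) = 0 := by
    simp
  rw [first_term_eq_zero, add_zero]
  refine sum_congr rfl fun j hj ↦ ?_
  have hjv : j ≤ v := mem_range_succ_iff.mp hj
  have absorption : ((v : R) + 1) * v.choose j = (v + 1).choose (j + 1) * (j + 1) := by
    exact_mod_cast congrArg (Nat.cast (R := R)) (Nat.add_one_mul_choose_eq v j)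
  have node_eq : ((j + 1 : ℕ) : R) * x + ((v - j : ℕ) : R) * y = j * x + (v - j : ℕ) * y + x := by
    push_cast
    ring
  rw [Nat.add_sub_add_right, node_eq, Nat.cast_sub hjv]
  linear_combination (-(-1) ^ j * l ^ (v - j) * (y - x) * f (j * x + (v - j) * y + x)) * absorption

lemma weightedDiff_succ_mul (v : ℕ) (f : R → R) :
    weightedDiff x y l (v + 1) (fun z ↦ z * f z) =
      (v + 1) * y * weightedDiff x y l (v + 1) f +
        (v + 1) * (y - x) * weightedDiff x y l v (fun z ↦ f (z + x)) := by
  have split : (fun z ↦ z * f z) =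
      (((v : R) + 1) * y) • f + fun z ↦ (z - (v + 1) * y) * f z := by
    ext z
    simp only [Pi.add_apply, Pi.smul_apply, smul_eq_mul]
    ring
  rw [split, map_add, map_smul, smul_eq_mul, weightedDiff_succ_sub_mul]

lemma weightedDiff_add_pow (v m : ℕ) (c : R) :
    weightedDiff x y l v (fun z ↦ (z + c) ^ m) =
      ∑ k ∈ range (m + 1), (m.choose k : R) * weightedDiff x y l v (fun z ↦ z ^ k) *
        c ^ (m - k) := by
  have expansion : (fun z : R ↦ (z + c) ^ m) =
      ∑ k ∈ range (m + 1), ((m.choose k : R) * c ^ (m - k)) • fun z ↦ z ^ k := by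
    ext z
    simp only [add_pow, Finset.sum_apply, Pi.smul_apply, smul_eq_mul]
    exact sum_congr rfl fun k _ ↦ by ring
  simp only [expansion, map_sum, map_smul, smul_eq_mul]
  exact sum_congr rfl fun k _ ↦ by ring

theorem weightedDiff_succ_pow_succ (v m : ℕ) :
    weightedDiff x y l (v + 1) (fun z ↦ z ^ (m + 1)) =
      (v + 1) * y * weightedDiff x y l (v + 1) (fun z ↦ z ^ m) +
        (v + 1) * (y - x) * ∑ k ∈ range (m + 1),
          (m.choose k : R) * weightedDiff x y l v (fun z ↦ z ^ k) * x ^ (m - k) := by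
  simp only [pow_succ' _ m, weightedDiff_succ_mul, weightedDiff_add_pow]

end WeightedDiff

lemma genStirling_eq_weightedDiff (a b : ℝ) (lam : ℂ) (n v : ℕ) :
    genStirling a b lam n v =
      weightedDiff (Real.log a : ℂ) (Real.log b) lam v (fun z ↦ z ^ n) / v.factorial := by
  rw [genStirling, weightedDiff_apply, one_div_mul_eq_div]

theorem stmt_2 (a b : ℝ) (ha : 0 < a) (hb : 0 < b) (hab : a ≠ b) (lam : ℂ) (n v : ℕ)
    (hn : 1 ≤ n) (hv : 1 ≤ v) :
    genStirling a b lam n v =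
      (v : ℂ) * (Real.log b : ℂ) * genStirling a b lam (n - 1) v +
        (Real.log (b / a) : ℂ) * ∑ j ∈ range n,
          ((n - 1).choose j : ℂ) * genStirling a b lam j (v - 1) *
            (Real.log a : ℂ) ^ (n - 1 - j) := by
  obtain ⟨m, rfl⟩ := Nat.exists_eq_add_of_le' hn
  obtain ⟨w, rfl⟩ := Nat.exists_eq_add_of_le' hv
  have factorial_ne_zero : (w.factorial : ℂ) ≠ 0 := mod_cast w.factorial_ne_zero
  have succ_ne_zero : (w : ℂ) + 1 ≠ 0 := w.cast_add_one_ne_zero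
  simp only [genStirling_eq_weightedDiff, Nat.add_sub_cancel, weightedDiff_succ_pow_succ,
    Real.log_div hb.ne' ha.ne', Nat.factorial_succ, mul_div_assoc', div_mul_eq_mul_div, ← sum_div]
  push_cast
  field_simp
end

section
/- Let a, b be positive real numbers with a ≠ b, let λ ∈ ℂ, and let m, x ∈ ℕ. Then λ^x·(x·ln b)^m = Σ_{l=0}^{m} Σ_{j=0}^{x} binom(m,l)·binom(x,j)·j!·S(l,j;a,b;λ)·((x−j)·ln a)^{m−l}. -/
open Finset

/-!
The numbers have the exponential generating function
`∑ n, S(n, v) tⁿ / n! = (λ e^{βt} - e^{αt})^v / v!` with `α = log a`, `β = log b`, and the theorem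
compares coefficients of `tᵐ` in the binomial expansion of
`(λ e^{βt})^x = ((λ e^{βt} - e^{αt}) + e^{αt})^x`. Formal exponential sums `∑ r e^{ct}` form the
additive monoid algebra `R[R]`, with `r e^{ct}` being `single c r`; reading off `m!` times the
coefficient of `tᵐ` is the linear map `r e^{ct} ↦ r cᵐ`, so no division is needed and the argument
works over every commutative ring.
-/

open AddMonoidAlgebra

section Moment

variable {R : Type*} [CommSemiring R]

/-- The `n`-th moment `∑ r cⁿ` of a formal exponential sum `∑ r e^{ct}`, that is, its `n`-th
derivative at `t = 0`. The sum is encoded as an element of `R[R]` with `r e^{ct} = single c r`. -/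
noncomputable def moment (n : ℕ) : R[R] →ₗ[R] R :=
  Finsupp.linearCombination R (· ^ n) ∘ₗ (coeffLinearEquiv R).toLinearMap

lemma moment_single (n : ℕ) (c r : R) : moment n (single c r) = r * c ^ n := by
  simp [moment]

lemma moment_mul (n : ℕ) (f g : R[R]) :
    moment n (f * g) =
      ∑ l ∈ range (n + 1), (n.choose l : R) * moment l f * moment (n - l) g := by
  induction f using AddMonoidAlgebra.induction_linear with
  | zero => simp
  | add f₁ f₂ h₁ h₂ => simp only [add_mul, mul_add, map_add, sum_add_distrib, h₁, h₂]
  | single c r =>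
    induction g using AddMonoidAlgebra.induction_linear with
    | zero => simp
    | add g₁ g₂ h₁ h₂ => simp only [mul_add, map_add, sum_add_distrib, h₁, h₂]
    | single d s =>
      simp only [single_mul_single, moment_single, add_pow, mul_sum]
      exact sum_congr rfl fun l _ ↦ by ring

end Moment

section StirlingSum

variable {R : Type*} [CommRing R]

/-- The sum `v! S(n, v; a, b; λ)`, with `α` and `β` standing for `log a` and `log b`. Unlike
`genStirling` it is free of division, so it makes sense over any commutative ring. -/
def stirlingSum (α β lam : R) (n v : ℕ) : R :=
  ∑ j ∈ range (v + 1),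
    (-1) ^ j * (v.choose j : R) * lam ^ (v - j) * ((j : R) * α + ((v - j : ℕ) : R) * β) ^ n

lemma moment_single_sub_single_pow (α β lam : R) (n v : ℕ) :
    moment n ((single β lam - single α 1) ^ v) = stirlingSum α β lam n v := by
  rw [sub_eq_neg_add, ← single_neg, add_pow, map_sum, stirlingSum]
  refine sum_congr rfl fun j _ ↦ ?_
  rw [single_pow, single_pow, single_mul_single, mul_comm, ← nsmul_eq_mul, map_nsmul,
    moment_single]
  simp only [nsmul_eq_mul]
  ring

theorem stmt_3_general (α β lam : R) (m x : ℕ) :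
    lam ^ x * ((x : R) * β) ^ m =
      ∑ l ∈ range (m + 1), ∑ j ∈ range (x + 1),
        (m.choose l : R) * (x.choose j : R) * stirlingSum α β lam l j *
          (((x - j : ℕ) : R) * α) ^ (m - l) := by
  let D : R[R] := single β lam - single α 1
  calc lam ^ x * ((x : R) * β) ^ m
      = moment m ((D + single α 1) ^ x) := by
        rw [sub_add_cancel, single_pow, moment_single, nsmul_eq_mul]
    _ = ∑ j ∈ range (x + 1), (x.choose j : R) * moment m (D ^ j * single α 1 ^ (x - j)) := by
        simp only [add_pow, map_sum, mul_comm _ ((x.choose _ : ℕ) : R[R]),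
          ← nsmul_eq_mul, map_nsmul]
    _ = ∑ j ∈ range (x + 1), ∑ l ∈ range (m + 1),
          (m.choose l : R) * (x.choose j : R) * stirlingSum α β lam l j *
            (((x - j : ℕ) : R) * α) ^ (m - l) := by
        simp only [moment_mul, D, moment_single_sub_single_pow, single_pow, moment_single,
          one_pow, one_mul, nsmul_eq_mul, mul_sum]
        exact sum_congr rfl fun j _ ↦ sum_congr rfl fun l _ ↦ by ring
    _ = _ := sum_comm

end StirlingSum

lemma factorial_mul_genStirling (a b : ℝ) (lam : ℂ) (n v : ℕ) :
    (v.factorial : ℂ) * genStirling a b lam n v =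
      stirlingSum (Real.log a : ℂ) (Real.log b : ℂ) lam n v := by
  rw [genStirling, ← mul_assoc, mul_one_div_cancel (Nat.cast_ne_zero.mpr v.factorial_ne_zero),
    one_mul, stirlingSum]

theorem stmt_3 (a b : ℝ) (ha : 0 < a) (hb : 0 < b) (hab : a ≠ b) (lam : ℂ) (m x : ℕ) :
    lam ^ x * ((x : ℂ) * (Real.log b : ℂ)) ^ m =
      ∑ l ∈ range (m + 1), ∑ j ∈ range (x + 1),
        (m.choose l : ℂ) * (x.choose j : ℂ) * (j.factorial : ℂ) *
          genStirling a b lam l j * (((x - j : ℕ) : ℂ) * (Real.log a : ℂ)) ^ (m - l) := by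
  simpa only [mul_assoc, ← factorial_mul_genStirling] using
    stmt_3_general (Real.log a : ℂ) (Real.log b : ℂ) lam m x
end

section
/- Let a, b be positive real numbers with a ≠ b, let x ∈ ℝ, λ ∈ ℂ and n, v ∈ ℕ. Then S_v^n(x;a,b;λ) = Σ_{j=0}^{n} binom(n,j)·S(j,v;a,b;λ)·(x·ln b)^{n−j}. -/
open Finset

/-- The generalized array type polynomials. -/
noncomputable def arrayPoly (a b x : ℝ) (lam : ℂ) (n v : ℕ) : ℂ :=
  (1 / (v.factorial : ℂ)) * ∑ j ∈ range (v + 1),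
    (-1) ^ (v - j) * (v.choose j : ℂ) * lam ^ j *
      (((v - j : ℕ) : ℂ) * (Real.log a : ℂ) + ((x : ℂ) + (j : ℂ)) * (Real.log b : ℂ)) ^ n

theorem sum_mul_add_pow {ι R : Type*} [CommSemiring R] (s : Finset ι) (w c : ι → R) (t : R)
    (n : ℕ) :
    ∑ i ∈ s, w i * (c i + t) ^ n =
      ∑ m ∈ range (n + 1), (n.choose m : R) * (∑ i ∈ s, w i * c i ^ m) * t ^ (n - m) := by
  simp only [add_pow, mul_sum, sum_mul]
  rw [sum_comm]
  refine sum_congr rfl fun m _ => sum_congr rfl fun i _ => ?_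
  ring

theorem arrayPoly_zero_eq_genStirling (a b : ℝ) (lam : ℂ) (n v : ℕ) :
    arrayPoly a b 0 lam n v = genStirling a b lam n v := by
  unfold arrayPoly genStirling
  rw [← sum_flip]
  congr 1
  refine sum_congr rfl fun j hj => ?_
  have hjv : j ≤ v := mem_range_succ_iff.mp hj
  rw [Nat.sub_sub_self hjv, Nat.choose_symm hjv, Complex.ofReal_zero, zero_add]

/-- For fixed `v`, this is the Appell addition formula in the variable `x * log b`. -/
theorem arrayPoly_add (a b x y : ℝ) (lam : ℂ) (n v : ℕ) :
    arrayPoly a b (x + y) lam n v =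
      ∑ j ∈ range (n + 1), (n.choose j : ℂ) * arrayPoly a b x lam j v *
        ((y : ℂ) * (Real.log b : ℂ)) ^ (n - j) := by
  have base_add (j : ℕ) :
      ((v - j : ℕ) : ℂ) * (Real.log a : ℂ) + (((x + y : ℝ) : ℂ) + (j : ℂ)) * (Real.log b : ℂ) =
        ((v - j : ℕ) : ℂ) * (Real.log a : ℂ) + ((x : ℂ) + (j : ℂ)) * (Real.log b : ℂ) +
          (y : ℂ) * (Real.log b : ℂ) := by
    push_cast
    ring
  simp only [arrayPoly, base_add]
  rw [sum_mul_add_pow, mul_sum]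
  refine sum_congr rfl fun j _ => ?_
  ring

theorem stmt_5 (a b : ℝ) (ha : 0 < a) (hb : 0 < b) (hab : a ≠ b) (x : ℝ) (lam : ℂ) (n v : ℕ) :
    arrayPoly a b x lam n v =
      ∑ j ∈ range (n + 1), (n.choose j : ℂ) * genStirling a b lam j v *
        ((x : ℂ) * (Real.log b : ℂ)) ^ (n - j) := by
  simpa only [zero_add, arrayPoly_zero_eq_genStirling] using arrayPoly_add a b 0 x lam n v
end

section
/- Let a, b be positive real numbers with a ≠ b, let λ ∈ ℂ, and let n, v, j ∈ ℕ with j ≤ n. Then the j-th iterated derivative of the function ℝ → ℂ given by x ↦ S_v^n(x;a,b;λ) equals the function x ↦ n·(n−1)⋯(n−j+1)·(ln b)^j·S_v^{n−j}(x;a,b;λ) (where n·(n−1)⋯(n−j+1) is the descending factorial with j factors). -/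
open Finset

/-!
For fixed `v`, the polynomials `S_v^n(x)` are a linear combination, with coefficients independent of
`n`, of the powers `ℓ_k(x) ^ n` of affine functions `ℓ_k` that all have the same slope `c = ln b`.
Hence they inherit from the powers the rule `S_v^n' = n c S_v^{n-1}`, and iterating it produces the
descending factorial and the power of `c`.
-/

/-- A sequence of functions `f 0, f 1, …` is an *Appell sequence of scale `c`* if
`(f n)' = n c f (n - 1)`; scale `1` is the classical notion, for polynomials. At `n = 0` the
truncated index `n - 1` is harmless, since the factor `n` makes `f 0` have derivative zero. -/
def IsAppellSequence {𝕜 A : Type*} [NontriviallyNormedField 𝕜] [NormedCommRing A]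
    [NormedAlgebra 𝕜 A] (c : A) (f : ℕ → 𝕜 → A) : Prop :=
  ∀ n x, HasDerivAt (f n) (n * c * f (n - 1) x) x

namespace IsAppellSequence

variable {𝕜 A : Type*} [NontriviallyNormedField 𝕜] [NormedCommRing A] [NormedAlgebra 𝕜 A] {c : A}

theorem pow_of_hasDerivAt {g : 𝕜 → A} (hg : ∀ x, HasDerivAt g c x) :
    IsAppellSequence c fun n x ↦ g x ^ n := fun n x ↦
  ((hg x).fun_pow n).congr_deriv (mul_right_comm _ _ _)

theorem const_mul {f : ℕ → 𝕜 → A} (hf : IsAppellSequence c f) (w : A) :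
    IsAppellSequence c fun n x ↦ w * f n x := fun n x ↦
  ((hf n x).const_mul w).congr_deriv (mul_left_comm _ _ _)

theorem sum {ι : Type*} {s : Finset ι} {f : ι → ℕ → 𝕜 → A}
    (hf : ∀ i ∈ s, IsAppellSequence c (f i)) :
    IsAppellSequence c fun n x ↦ ∑ i ∈ s, f i n x := fun n x ↦
  (HasDerivAt.fun_sum fun i hi ↦ hf i hi n x).congr_deriv (mul_sum _ _ _).symm

theorem iteratedDeriv_eq {f : ℕ → 𝕜 → A} (hf : IsAppellSequence c f) (n j : ℕ) :
    iteratedDeriv j (f n) = fun x ↦ (n.descFactorial j : A) * c ^ j * f (n - j) x := by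
  induction j with
  | zero => simp
  | succ j ih =>
    funext x
    calc iteratedDeriv (j + 1) (f n) x
      _ = deriv (fun y ↦ (n.descFactorial j : A) * c ^ j * f (n - j) y) x := by
        rw [iteratedDeriv_succ, ih]
      _ = (n.descFactorial j : A) * c ^ j * (((n - j : ℕ) : A) * c * f (n - j - 1) x) :=
        ((hf (n - j) x).const_mul _).deriv
      _ = (n.descFactorial (j + 1) : A) * c ^ (j + 1) * f (n - (j + 1)) x := by
        rw [Nat.descFactorial_succ, Nat.sub_sub, Nat.cast_mul]
        ring

end IsAppellSequence

theorem hasDerivAt_add_ofReal_add_mul (p q c : ℂ) (x : ℝ) :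
    HasDerivAt (fun y : ℝ ↦ p + ((y : ℂ) + q) * c) c x := by
  have hx : HasDerivAt (fun y : ℝ ↦ (y : ℂ)) 1 x := Complex.ofRealCLM.hasDerivAt
  simpa only [one_mul] using ((hx.add_const q).mul_const c).const_add p

theorem isAppellSequence_arrayPoly (a b : ℝ) (lam : ℂ) (v : ℕ) :
    IsAppellSequence (Real.log b : ℂ) fun n (x : ℝ) ↦ arrayPoly a b x lam n v :=
  (IsAppellSequence.sum fun _ _ ↦
    (IsAppellSequence.pow_of_hasDerivAt
      (hasDerivAt_add_ofReal_add_mul _ _ _)).const_mul _).const_mul _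

theorem stmt_6 (a b : ℝ) (ha : 0 < a) (hb : 0 < b) (hab : a ≠ b) (lam : ℂ) (n v j : ℕ)
    (hj : j ≤ n) :
    iteratedDeriv j (fun x : ℝ => arrayPoly a b x lam n v) =
      fun x : ℝ => (n.descFactorial j : ℂ) * (Real.log b : ℂ) ^ j *
        arrayPoly a b x lam (n - j) v :=
  (isAppellSequence_arrayPoly a b lam v).iteratedDeriv_eq n j
end
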